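/- Let R be a commutative noetherian ring with identity and a an ideal of R with ara(a) ≤ 1. Then for every finitely generated R-module M, the local cohomology modules H^0_a(M) and H^1_a(M) are a-cofinite, and H^i_a(M) = 0 for all i ≥ 2. -/

import Mathlib

universe u

open CategoryTheory

/-- `Ext^i_R(R/a, M)` as an `R`-module, for `M : ModuleCat R`. -/
noncomputable def extQuot {R : Type u} [CommRing R] (a : Ideal R) (i : ℕ)
    (M : ModuleCat.{u} R) : ModuleCat.{u} R :=
  ((Ext R (ModuleCat.{u} R) i).obj (Opposite.op (ModuleCat.of R (R ⧸ a)))).obj M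

/-- An `R`-module `M` is `a`-cofinite if `Supp M ⊆ V(a)` and `Ext^i_R(R/a, M)` is a
finitely generated `R`-module for every `i ≥ 0`. -/
def IsCofinite {R : Type u} [CommRing R] (a : Ideal R) (M : ModuleCat.{u} R) : Prop :=
  Module.support R M ⊆ PrimeSpectrum.zeroLocus (a : Set R) ∧
    ∀ i : ℕ, Module.Finite R (extQuot a i M)

/- With `H¹_J(M)` presented as the cokernel of `M → D_J(M) = colim_t Hom(J^t, M)`, the proof rests
on stabilization: if `J = (x)` in a noetherian ring, multiplication by `x` is an isomorphism
`x^t R ≅ x^(t+1) R` for large `t`. Hence `x` acts bijectively on `D_J(M)`, so all `Ext(R/a, D_J(M))`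
vanish when a power of `x` lies in `a`, and `Ext^i(R/a, H¹_J(M))` embeds in `Ext^(i+1)(R/a, N)` with
`N` the image of `M` in `D_J(M)`. Likewise `x^(m+t) R ⊆ x^t R` factors through the free module `R`
for large `m`, which kills the colimit of the `Ext^i(R/J^t, M)` for `i ≥ 2`. -/

namespace CofiniteLocalCohomology

open Limits Abelian Opposite

universe w v v'

/-! ### Comparison of derived-functor `Ext` with `Abelian.Ext` -/

section
variable {R : Type*} [Ring R] {ι : Type*} {c : ComplexShape ι}
  (K : HomologicalComplex (ModuleCat R) c) (n : ι)

lemma iCycles_injective : Function.Injective (K.iCycles n) :=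
  (ModuleCat.mono_iff_injective _).1 inferInstance

lemma exact_iCycles_d : Function.Exact (K.iCycles n) (K.d n (c.next n)) :=
  (ShortComplex.ShortExact.moduleCat_exact_iff_function_exact (.mk _ _ (K.iCycles_d n _))).1
    (ShortComplex.exact_of_f_is_kernel _ (K.cyclesIsKernel n _ rfl))

lemma exact_toCycles_homologyπ : Function.Exact (K.toCycles (c.prev n) n) (K.homologyπ n) :=
  (ShortComplex.ShortExact.moduleCat_exact_iff_function_exact
    (.mk _ _ (K.toCycles_comp_homologyπ _ n))).1
    (ShortComplex.exact_of_g_is_cokernel _ (K.homologyIsCokernel _ n rfl))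

lemma homologyπ_eq_zero_iff (z : K.cycles n) :
    K.homologyπ n z = 0 ↔ ∃ y, K.d (c.prev n) n y = K.iCycles n z := by
  rw [exact_toCycles_homologyπ K n z]
  refine exists_congr fun y => ?_
  rw [← (iCycles_injective K n).eq_iff, ← K.toCycles_i, ModuleCat.comp_apply]

end

section
variable {R : Type*} [CommRing R] {C : Type*} [Category* C] [Abelian C] [Linear R C]

variable (R) in
/-- The map of cochain complexes `Hom(L, Y) ⟶ Hom(K, Y)` induced by `φ : K ⟶ L`. -/
noncomputable def linearYonedaMap {K L : ChainComplex C ℕ} (φ : K ⟶ L) (Y : C) :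
    L.linearYonedaObj R Y ⟶ K.linearYonedaObj R Y :=
  (HomologicalComplex.unopFunctor _ _).map
    (((((linearYoneda R C).obj Y).rightOp).mapHomologicalComplex _).map φ).op

lemma isoExt_inv_naturality [EnoughProjectives C] {X X' : C} (P : ProjectiveResolution X)
    (P' : ProjectiveResolution X') {g : X' ⟶ X} (φ : ProjectiveResolution.Hom P' P g) (n : ℕ)
    (Y : C) :
    (P.isoExt n Y).inv ≫ ((_root_.Ext R C n).map g.op).app Y =
      HomologicalComplex.homologyMap (linearYonedaMap R φ.hom Y) n ≫ (P'.isoExt n Y).inv := by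
  let F := ((linearYoneda R C).obj Y).rightOp
  have derived := congrArg Quiver.Hom.unop <|
    ProjectiveResolution.isoLeftDerivedObj_hom_naturality g P' P φ.hom
      (by simpa using φ.hom_f_zero_comp_π_f_zero) F n
  have unop := congrArg Quiver.Hom.unop <|
    HomologicalComplex.homologyOp_hom_naturality (linearYonedaMap R φ.hom Y) n
  exact (Category.assoc _ _ _).trans <| (congrArg (_ ≫ ·) derived).trans <|
    (Category.assoc _ _ _).symm.trans <| (congrArg (· ≫ _) unop).trans (Category.assoc _ _ _)

lemma nonempty_projectiveResolution_hom {X X' : C} (P : ProjectiveResolution X)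
    (P' : ProjectiveResolution X') (g : X' ⟶ X) : Nonempty (ProjectiveResolution.Hom P' P g) :=
  ⟨⟨ProjectiveResolution.lift g P' P,
    congr(($(ProjectiveResolution.lift_commutes g P' P)).f 0)⟩⟩

variable {X : C} (P : ProjectiveResolution X)

variable (R) in
/-- The morphism `Pₙ ⟶ Y` underlying an `n`-cocycle of the complex `Hom(P, Y)`. -/
noncomputable def cocycleHom (n : ℕ) (Y : C) :
    (P.complex.linearYonedaObj R Y).cycles n →ₗ[R] (P.complex.X n ⟶ Y) :=
  ((P.complex.linearYonedaObj R Y).iCycles n).hom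

lemma d_comp_cocycleHom {n : ℕ} {Y : C} (z : (P.complex.linearYonedaObj R Y).cycles n) :
    P.complex.d (n + 1) n ≫ cocycleHom R P n Y z = 0 :=
  congr($((P.complex.linearYonedaObj R Y).iCycles_d n (n + 1)) z)

lemma exists_cocycleHom_eq {n : ℕ} {Y : C} {f : P.complex.X n ⟶ Y}
    (hf : P.complex.d (n + 1) n ≫ f = 0) : ∃ z, cocycleHom R P n Y z = f :=
  (exact_iCycles_d (P.complex.linearYonedaObj R Y) n f).1 (by rw [CochainComplex.next]; exact hf)

variable [EnoughProjectives C]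

variable (R) in
/-- The class in the derived-functor `Ext` of an `n`-cocycle of `Hom(P, Y)`. -/
noncomputable def derivedClass (n : ℕ) (Y : C) :
    (P.complex.linearYonedaObj R Y).cycles n →ₗ[R] ((_root_.Ext R C n).obj (op X)).obj Y :=
  ((P.complex.linearYonedaObj R Y).homologyπ n ≫ (P.isoExt n Y).inv).hom

lemma derivedClass_surjective (n : ℕ) (Y : C) : Function.Surjective (derivedClass R P n Y) :=
  (ModuleCat.epi_iff_surjective _).1 (epi_comp _ _)

lemma derivedClass_eq_zero_iff {n : ℕ} {Y : C} (z : (P.complex.linearYonedaObj R Y).cycles n) :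
    derivedClass R P n Y z = 0 ↔
      ∃ g : P.complex.X ((ComplexShape.up ℕ).prev n) ⟶ Y,
        P.complex.d n _ ≫ g = cocycleHom R P n Y z := by
  have isoExt_inv_injective : Function.Injective (P.isoExt (R := R) n Y).inv :=
    (ModuleCat.mono_iff_injective _).1 inferInstance
  exact (map_eq_zero_iff (P.isoExt (R := R) n Y).inv.hom isoExt_inv_injective).trans
    (homologyπ_eq_zero_iff _ n z)

lemma map_derivedClass {P} {X' : C} {P' : ProjectiveResolution X'} {g : X' ⟶ X}
    (φ : ProjectiveResolution.Hom P' P g) {n : ℕ} {Y : C}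
    (z : (P.complex.linearYonedaObj R Y).cycles n) :
    ((_root_.Ext R C n).map g.op).app Y (derivedClass R P n Y z) =
      derivedClass R P' n Y (HomologicalComplex.cyclesMap (linearYonedaMap R φ.hom Y) n z) := by
  have naturality :=
    congr((P.complex.linearYonedaObj R Y).homologyπ n ≫ $(isoExt_inv_naturality P P' φ n Y))
  rw [HomologicalComplex.homologyπ_naturality_assoc] at naturality
  exact congr($naturality z)

end

section
variable {R : Type*} [CommRing R] {C : Type v'} [Category.{v} C] [Abelian C] [HasExt.{w} C]
  {X Y : C} (P : ProjectiveResolution X)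

lemma extMk_zero_eq_zero_iff (f : P.complex.X 0 ⟶ Y) (hf : P.complex.d 1 0 ≫ f = 0) :
    P.extMk f 1 rfl hf = 0 ↔ f = 0 := by
  refine ⟨fun h => ?_, by rintro rfl; exact P.extMk_zero 1 rfl⟩
  rw [← P.extEquivCohomologyClass.apply_eq_iff_eq, P.extEquivCohomologyClass_extMk,
    P.extEquivCohomologyClass_zero, CochainComplex.HomComplex.CohomologyClass.mk_eq_zero_iff,
    CochainComplex.HomComplex.Cocycle.toSingleMk_mem_coboundaries_iff _ _ _ _ _ 1 (by simp)] at h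
  obtain ⟨g, hg⟩ := h
  have source_isZero : IsZero (P.cochainComplex.X 1) := P.cochainComplex.isZero_of_isStrictlyLE 0 1
  rw [source_isZero.eq_of_src g 0, comp_zero] at hg
  exact (cancel_epi (P.cochainComplexXIso (-(0 : ℕ)) 0 rfl).hom).1 (hg.symm.trans comp_zero.symm)

lemma extMk_eq_zero_iff {n : ℕ} (f : P.complex.X n ⟶ Y) (hf : P.complex.d (n + 1) n ≫ f = 0) :
    P.extMk f (n + 1) rfl hf = 0 ↔
      ∃ g : P.complex.X ((ComplexShape.up ℕ).prev n) ⟶ Y, P.complex.d n _ ≫ g = f := by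
  cases n with
  | zero => simpa [P.complex.shape, eq_comm] using extMk_zero_eq_zero_iff P f hf
  | succ p => rw [CochainComplex.prev_nat_succ, P.extMk_eq_zero_iff f (p + 2) rfl hf p rfl]

variable [Linear R C]

variable (R) in
/-- The class in `Abelian.Ext` of an `n`-cocycle of `Hom(P, Y)`. -/
noncomputable def cocycleClass (n : ℕ) (Y : C) :
    (P.complex.linearYonedaObj R Y).cycles n →ₗ[R] Abelian.Ext X Y n where
  toFun z := P.extMk (cocycleHom R P n Y z) (n + 1) rfl (d_comp_cocycleHom P z)
  map_add' z z' := by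
    rw [P.add_extMk]
    congr 1
    exact map_add _ _ _
  map_smul' r z := by
    simp only [Abelian.Ext.smul_eq_comp_mk₀, P.extMk_comp_mk₀, map_smul, Linear.comp_smul,
      Category.comp_id, RingHom.id_apply]

lemma cocycleClass_surjective (n : ℕ) (Y : C) : Function.Surjective (cocycleClass R P n Y) := by
  intro e
  obtain ⟨f, hf, rfl⟩ := P.extMk_surjective e (n + 1) rfl
  obtain ⟨z, rfl⟩ := exists_cocycleHom_eq (R := R) P hf
  exact ⟨z, rfl⟩

lemma cocycleClass_cyclesMap {P} {X' : C} {P' : ProjectiveResolution X'} {g : X' ⟶ X}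
    (φ : ProjectiveResolution.Hom P' P g) {n : ℕ}
    (z : (P.complex.linearYonedaObj R Y).cycles n) :
    cocycleClass R P' n Y (HomologicalComplex.cyclesMap (linearYonedaMap R φ.hom Y) n z) =
      (Abelian.Ext.mk₀ g).comp (cocycleClass R P n Y z) (zero_add n) := by
  have cocycleHom_cyclesMap :
      cocycleHom R P' n Y (HomologicalComplex.cyclesMap (linearYonedaMap R φ.hom Y) n z) =
        φ.hom.f n ≫ cocycleHom R P n Y z :=
    congr($(HomologicalComplex.cyclesMap_i (linearYonedaMap R φ.hom Y) n) z)
  refine Eq.trans ?_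
    (ProjectiveResolution.mk₀_comp_extMk _ _ rfl (d_comp_cocycleHom P z) φ).symm
  simp only [← cocycleHom_cyclesMap]
  rfl

variable [EnoughProjectives C]

lemma ker_derivedClass (n : ℕ) (Y : C) :
    LinearMap.ker (derivedClass R P n Y) = LinearMap.ker (cocycleClass R P n Y) :=
  Submodule.ext fun z => (derivedClass_eq_zero_iff P z).trans
    (extMk_eq_zero_iff P _ (d_comp_cocycleHom P z)).symm

variable (R) in
/-- The comparison of the two `Ext` modules through cocycles of a projective resolution `P`. -/
noncomputable def resolutionEquiv (n : ℕ) (Y : C) :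
    ((_root_.Ext R C n).obj (op X)).obj Y ≃ₗ[R] Abelian.Ext X Y n :=
  ((derivedClass R P n Y).quotKerEquivOfSurjective (derivedClass_surjective P n Y)).symm ≪≫ₗ
    Submodule.quotEquivOfEq _ _ (ker_derivedClass P n Y) ≪≫ₗ
    (cocycleClass R P n Y).quotKerEquivOfSurjective (cocycleClass_surjective P n Y)

@[simp]
lemma resolutionEquiv_derivedClass {n : ℕ} {Y : C} (z) :
    resolutionEquiv R P n Y (derivedClass R P n Y z) = cocycleClass R P n Y z := by
  have derivedClass_eq_mk : derivedClass R P n Y z =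
      (derivedClass R P n Y).quotKerEquivOfSurjective (derivedClass_surjective P n Y)
        (Submodule.Quotient.mk z) := rfl
  rw [derivedClass_eq_mk]
  simp [resolutionEquiv]

lemma resolutionEquiv_naturality {X' : C} {P} {P' : ProjectiveResolution X'} {g : X' ⟶ X}
    (φ : ProjectiveResolution.Hom P' P g) {n : ℕ} {Y : C}
    (e : ((_root_.Ext R C n).obj (op X)).obj Y) :
    resolutionEquiv R P' n Y (((_root_.Ext R C n).map g.op).app Y e) =
      (Abelian.Ext.mk₀ g).comp (resolutionEquiv R P n Y e) (zero_add n) := by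
  obtain ⟨z, rfl⟩ := derivedClass_surjective P n Y e
  rw [map_derivedClass φ, resolutionEquiv_derivedClass, resolutionEquiv_derivedClass,
    cocycleClass_cyclesMap]

variable (R) in
/-- The derived-functor `Ext`, which appears in `localCohomology` and `extQuot`, agrees with
`Abelian.Ext`, for which long exact sequences are available. -/
noncomputable def extEquiv (X Y : C) (n : ℕ) :
    ((_root_.Ext R C n).obj (op X)).obj Y ≃ₗ[R] Abelian.Ext X Y n :=
  resolutionEquiv R (projectiveResolution X) n Y

lemma extEquiv_naturality {X X' Y : C} {n : ℕ} (g : X' ⟶ X)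
    (e : ((_root_.Ext R C n).obj (op X)).obj Y) :
    extEquiv R X' Y n (((_root_.Ext R C n).map g.op).app Y e) =
      (Abelian.Ext.mk₀ g).comp (extEquiv R X Y n e) (zero_add n) :=
  (nonempty_projectiveResolution_hom _ _ g).elim fun φ => resolutionEquiv_naturality φ e

end

/-! ### Local cohomology as a direct limit -/

section
variable {R : Type u} [CommRing R]

/-- The projection `R/I ⟶ R/I'` in `ModuleCat R`, for `I ≤ I'`. -/
def quotientMap {I I' : Ideal R} (h : I ≤ I') :
    ModuleCat.of R (R ⧸ I) ⟶ ModuleCat.of R (R ⧸ I') :=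
  ModuleCat.ofHom (Submodule.factor h)

/-- The map `Ext^n(R/I', M) → Ext^n(R/I, M)` induced by the projection `R/I → R/I'`. -/
noncomputable def extQuotientMap {I I' : Ideal R} (h : I ≤ I') (M : ModuleCat.{u} R) (n : ℕ) :
    Abelian.Ext (ModuleCat.of R (R ⧸ I')) M n →ₗ[R] Abelian.Ext (ModuleCat.of R (R ⧸ I)) M n :=
  (Abelian.Ext.mk₀ (quotientMap h)).precompOfLinear R M (zero_add n)

lemma extQuotientMap_apply {I I' : Ideal R} (h : I ≤ I') (M : ModuleCat.{u} R) (n : ℕ) (e) :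
    extQuotientMap h M n e = (Abelian.Ext.mk₀ (quotientMap h)).comp e (zero_add n) :=
  rfl

variable (J : Ideal R) (M : ModuleCat.{u} R) (n : ℕ)

/-- `Ext^n(R/J^t, M)`, the `t`-th term of the direct system defining local cohomology. -/
noncomputable abbrev extPow (t : ℕ) : Type u := Abelian.Ext (ModuleCat.of R (R ⧸ J ^ t)) M n

/-- The transition maps of the direct system `t ↦ Ext^n(R/J^t, M)`. -/
noncomputable abbrev extPowMap (s t : ℕ) (h : s ≤ t) : extPow J M n s →ₗ[R] extPow J M n t :=
  extQuotientMap (Ideal.pow_le_pow_right h) M n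

instance : DirectedSystem (extPow J M n) (extPowMap J M n · · ·) where
  map_self t e := by
    have : quotientMap (le_refl (J ^ t)) = 𝟙 _ := by ext; rfl
    simp [extQuotientMap_apply, this]
  map_map r s t hrs hst e := by
    have : quotientMap (Ideal.pow_le_pow_right hst) ≫ quotientMap (Ideal.pow_le_pow_right hrs) =
      quotientMap (Ideal.pow_le_pow_right (I := J) (hrs.trans hst)) := by ext; rfl
    simp [extQuotientMap_apply, this, Abelian.Ext.mk₀_comp_mk₀_assoc]

/-- `colim_t Ext^n(R/J^t, M)`, as a concrete direct limit of modules. -/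
noncomputable abbrev extColimit : Type u := Module.DirectLimit (extPow J M n) (extPowMap J M n)

/-- The diagram of derived-functor `Ext` modules whose colimit is, by definition, `H^n_J(M)`. The
index category is `ℕᵒᵖᵒᵖ` because Mathlib indexes the powers of `J` contravariantly. -/
noncomputable abbrev extDiagram : ℕᵒᵖᵒᵖ ⥤ ModuleCat.{u} R :=
  localCohomology.diagram (localCohomology.idealPowersDiagram J) n ⋙ (evaluation _ _).obj M

/-- `extEquiv` on the `t`-th term of `extDiagram`. -/
noncomputable def extDiagramEquiv (t : ℕ) :
    (extDiagram J M n).obj (op (op t)) ≃ₗ[R] extPow J M n t :=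
  extEquiv R (ModuleCat.of R (R ⧸ J ^ t)) M n

lemma extDiagramEquiv_map {s t : ℕᵒᵖᵒᵖ} (f : s ⟶ t) (e : (extDiagram J M n).obj s) :
    extDiagramEquiv J M n t.unop.unop ((extDiagram J M n).map f e) =
      extPowMap J M n _ _ (leOfHom f.unop.unop) (extDiagramEquiv J M n s.unop.unop e) :=
  extEquiv_naturality (quotientMap (Ideal.pow_le_pow_right (leOfHom f.unop.unop))) e

/-- The direct limit `extColimit`, as a cocone over `extDiagram`. -/
noncomputable def extCocone : Cocone (extDiagram J M n) where
  pt := ModuleCat.of R (extColimit J M n)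
  ι :=
    { app := fun t => ModuleCat.ofHom
        (Module.DirectLimit.of R ℕ _ (extPowMap J M n) t.unop.unop ∘ₗ
          (extDiagramEquiv J M n t.unop.unop).toLinearMap)
      naturality := fun s t f => by
        ext e
        exact (congrArg (Module.DirectLimit.of R ℕ _ (extPowMap J M n) t.unop.unop)
          (extDiagramEquiv_map J M n f e)).trans Module.DirectLimit.of_f }

/-- The map out of `extColimit` determined by a cocone over `extDiagram`. -/
noncomputable def extColimitDesc (c : Cocone (extDiagram J M n)) :
    extColimit J M n →ₗ[R] c.pt :=
  Module.DirectLimit.lift R ℕ _ _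
    (fun t => (c.ι.app (op (op t))).hom ∘ₗ (extDiagramEquiv J M n t).symm.toLinearMap)
    fun s t h e => by
      obtain ⟨e, rfl⟩ := (extDiagramEquiv J M n s).surjective e
      rw [← extDiagramEquiv_map J M n (homOfLE h).op.op e]
      simpa using congr($(c.w (homOfLE h).op.op) e)

variable {J M n} in
lemma extColimitDesc_of (c : Cocone (extDiagram J M n)) {t : ℕ}
    (e : (extDiagram J M n).obj (op (op t))) :
    extColimitDesc J M n c (Module.DirectLimit.of R ℕ _ _ t (extDiagramEquiv J M n t e)) =
      c.ι.app (op (op t)) e := by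
  simp [extColimitDesc]

/-- `extCocone` is a colimit cocone. -/
noncomputable def isColimitExtCocone : IsColimit (extCocone J M n) where
  desc c := ModuleCat.ofHom (extColimitDesc J M n c)
  fac c t := by
    ext e
    exact extColimitDesc_of c e
  uniq c m hm := by
    ext : 1
    refine Module.DirectLimit.hom_ext fun t => LinearMap.ext fun e => ?_
    obtain ⟨e, rfl⟩ := (extDiagramEquiv J M n t).surjective e
    exact congr($(hm (op (op t))) e).trans (extColimitDesc_of c e).symm

/-- `H^n_J(M)` is the direct limit of the modules `Ext^n(R/J^t, M)`. -/
noncomputable def localCohomologyEquiv : (localCohomology J n).obj M ≃ₗ[R] extColimit J M n :=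
  ((isColimitOfPreserves ((evaluation _ _).obj M) (colimit.isColimit
    (localCohomology.diagram (localCohomology.idealPowersDiagram J) n))).coconePointUniqueUpToIso
      (isColimitExtCocone J M n)).toLinearEquiv

end

/-! ### Supports, and cofiniteness in degree zero -/

section
variable {R : Type*} [CommRing R] {C : Type v'} [Category.{v} C] [Abelian C] [Linear R C]
  [HasExt.{w} C] {X Y : C}

lemma smul_ext_eq_zero {r : R} (hr : r • 𝟙 X = 0) {n : ℕ} (e : Abelian.Ext X Y n) :
    r • e = 0 := by
  rw [← e.mk₀_id_comp, ← Abelian.Ext.smul_comp, ← Abelian.Ext.mk₀_smul, hr,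
    Abelian.Ext.mk₀_zero, Abelian.Ext.zero_comp]

lemma subsingleton_ext_of_isIso_smul {r : R} (hr : r • 𝟙 X = 0) [IsIso (r • 𝟙 Y)] (n : ℕ) :
    Subsingleton (Abelian.Ext X Y n) := by
  refine subsingleton_of_forall_eq 0 fun e => ?_
  have comp_eq_zero : e.comp (Abelian.Ext.mk₀ (r • 𝟙 Y)) (add_zero n) = 0 := by
    rw [← Abelian.Ext.smul_eq_comp_mk₀, smul_ext_eq_zero hr]
  calc e = (e.comp (Abelian.Ext.mk₀ (r • 𝟙 Y)) (add_zero n)).comp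
        (Abelian.Ext.mk₀ (inv (r • 𝟙 Y))) (add_zero n) := by
        simp [-Linear.smul_comp]
    _ = 0 := by rw [comp_eq_zero, Abelian.Ext.zero_comp]

end

section
variable {R : Type u} [CommRing R]

lemma smul_id_quotient_eq_zero {I : Ideal R} {r : R} (hr : r ∈ I) :
    r • 𝟙 (ModuleCat.of R (R ⧸ I)) = 0 := by
  ext
  exact (Submodule.Quotient.mk_eq_zero I).2 (I.mul_mem_right 1 hr)

lemma support_localCohomology_subset (J : Ideal R) (M : ModuleCat.{u} R) (n : ℕ) :
    Module.support R ((localCohomology J n).obj M) ⊆ PrimeSpectrum.zeroLocus (J : Set R) := by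
  rw [(localCohomologyEquiv J M n).support_eq]
  intro p hp r hr
  obtain ⟨z, hz⟩ := Module.mem_support_iff'.1 hp
  obtain ⟨t, e, rfl⟩ := Module.DirectLimit.exists_of z
  by_contra r_notMem
  refine hz (r ^ t) (fun h => r_notMem (p.2.mem_of_pow_mem t h)) ?_
  rw [← map_smul, smul_ext_eq_zero (smul_id_quotient_eq_zero (Ideal.pow_mem_pow hr t)), map_zero]

lemma isCofinite_iff {a : Ideal R} {M : ModuleCat.{u} R} :
    IsCofinite a M ↔ Module.support R M ⊆ PrimeSpectrum.zeroLocus (a : Set R) ∧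
      ∀ n, Module.Finite R (Abelian.Ext (ModuleCat.of R (R ⧸ a)) M n) :=
  and_congr_right fun _ => forall_congr' fun n =>
    Module.Finite.equiv_iff (extEquiv R (ModuleCat.of R (R ⧸ a)) M n)

/-- The map `Ext^0(R/I, M) = Hom(R/I, M) → M` evaluating at `1`, which identifies
`Ext^0(R/I, M)` with the `I`-torsion of `M`. -/
noncomputable def extZeroEval (I : Ideal R) (M : ModuleCat.{u} R) :
    Abelian.Ext (ModuleCat.of R (R ⧸ I)) M 0 →ₗ[R] M :=
  LinearMap.applyₗ (1 : R ⧸ I) ∘ₗ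
    (Abelian.Ext.linearEquiv₀.trans ModuleCat.homLinearEquiv).toLinearMap

lemma extZeroEval_injective (I : Ideal R) (M : ModuleCat.{u} R) :
    Function.Injective (extZeroEval I M) := by
  have eval_one_injective : Function.Injective
      (LinearMap.applyₗ (R := R) (M₂ := M) (1 : R ⧸ I)) := fun f g h =>
    Submodule.linearMap_qext _ (LinearMap.ext_ring h)
  exact eval_one_injective.comp (LinearEquiv.injective _)

lemma extZeroEval_extQuotientMap {I I' : Ideal R} (h : I ≤ I') {M : ModuleCat.{u} R}
    (e : Abelian.Ext (ModuleCat.of R (R ⧸ I')) M 0) :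
    extZeroEval I M (extQuotientMap h M 0 e) = extZeroEval I' M e := by
  obtain ⟨f, rfl⟩ := (Abelian.Ext.mk₀_bijective _ _).2 e
  have linearEquiv₀_mk₀ {X Y : ModuleCat.{u} R} (g : X ⟶ Y) :
      Abelian.Ext.linearEquiv₀ (R := R) (Abelian.Ext.mk₀ g) = g :=
    Abelian.Ext.linearEquiv₀.apply_symm_apply g
  simp only [extQuotientMap_apply, Abelian.Ext.mk₀_comp_mk₀, extZeroEval, LinearMap.comp_apply,
    LinearEquiv.coe_coe, LinearEquiv.trans_apply, linearEquiv₀_mk₀]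
  rfl

lemma isCofinite_localCohomology_zero [IsNoetherianRing R] (J : Ideal R) (M : ModuleCat.{u} R)
    [Module.Finite R M] : IsCofinite J ((localCohomology J 0).obj M) := by
  let eval : extColimit J M 0 →ₗ[R] M := Module.DirectLimit.lift R ℕ _ _
    (fun t => extZeroEval (J ^ t) M) fun _ _ _ e => extZeroEval_extQuotientMap _ e
  have eval_injective : Function.Injective eval :=
    Module.DirectLimit.lift_injective _ _ fun t => extZeroEval_injective (J ^ t) M
  have : Module.Finite R ((localCohomology J 0).obj M) :=
    Module.Finite.of_injective (eval ∘ₗ (localCohomologyEquiv J M 0).toLinearMap)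
      (eval_injective.comp (LinearEquiv.injective _))
  exact isCofinite_iff.2 ⟨support_localCohomology_subset J M 0, fun _ => inferInstance⟩

end

/-! ### The sequence `0 → I → R → R/I → 0` -/

section
variable {R : Type u} [CommRing R]

/-- The short exact sequence `0 → I → R → R/I → 0`. -/
noncomputable abbrev quotientSequence (I : Ideal R) : ShortComplex (ModuleCat.{u} R) :=
  ModuleCat.shortComplexOfCompEqZero I.subtype I.mkQ
    (LinearMap.exact_subtype_mkQ I).linearMap_comp_eq_zero

lemma quotientSequence_shortExact (I : Ideal R) : (quotientSequence I).ShortExact :=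
  ModuleCat.shortComplex_shortExact _ (LinearMap.exact_subtype_mkQ I) I.subtype_injective
    I.mkQ_surjective

/-- The morphism of sequences `0 → I → R → R/I → 0` induced by `I ≤ I'`. -/
noncomputable def quotientSequenceMap {I I' : Ideal R} (h : I ≤ I') :
    quotientSequence I ⟶ quotientSequence I' where
  τ₁ := ModuleCat.ofHom (Submodule.inclusion h)
  τ₂ := 𝟙 _
  τ₃ := quotientMap h

lemma extQuotientMap_extClass_comp {I I' : Ideal R} (h : I ≤ I') {M : ModuleCat.{u} R} {n m : ℕ}
    (hm : 1 + n = m) (e : Abelian.Ext (ModuleCat.of R I') M n) :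
    extQuotientMap h M m ((quotientSequence_shortExact I').extClass.comp e hm) =
      (quotientSequence_shortExact I).extClass.comp
        ((Abelian.Ext.mk₀ (ModuleCat.ofHom (Submodule.inclusion h))).comp e (zero_add n)) hm := by
  have naturality := (quotientSequence_shortExact I).extClass_naturality
    (quotientSequence_shortExact I') (quotientSequenceMap h)
  rw [extQuotientMap_apply, ← Abelian.Ext.comp_assoc (a₁₂ := 1) _ _ _ (by lia) (by lia) (by lia),
    ← Abelian.Ext.comp_assoc (a₁₂ := 1) _ _ _ (by lia) (by lia) (by lia)]
  exact congr($(naturality).comp e hm).symm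

lemma exists_extClass_comp_eq {I : Ideal R} {M : ModuleCat.{u} R} {n : ℕ}
    (e : Abelian.Ext (ModuleCat.of R (R ⧸ I)) M (n + 1)) :
    ∃ e', (quotientSequence_shortExact I).extClass.comp e' (add_comm 1 n) = e :=
  Abelian.Ext.contravariant_sequence_exact₃ (quotientSequence_shortExact I) M e
    (Abelian.Ext.eq_zero_of_projective (P := ModuleCat.of R R) _) _

lemma extQuotientMap_eq_zero_of_inclusion_factors {I I' : Ideal R} (h : I ≤ I')
    (f : I →ₗ[R] R) (g : R →ₗ[R] I') (hgf : g ∘ₗ f = Submodule.inclusion h)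
    (M : ModuleCat.{u} R) (n : ℕ) : extQuotientMap h M (n + 2) = 0 := by
  ext e
  obtain ⟨e, rfl⟩ := exists_extClass_comp_eq e
  have factorization : ModuleCat.ofHom (Submodule.inclusion h) =
      ModuleCat.ofHom f ≫ ModuleCat.ofHom g := by rw [← ModuleCat.ofHom_comp, hgf]
  rw [extQuotientMap_extClass_comp, factorization, ← Abelian.Ext.mk₀_comp_mk₀_assoc,
    Abelian.Ext.eq_zero_of_projective ((Abelian.Ext.mk₀ (ModuleCat.ofHom g)).comp e _),
    Abelian.Ext.comp_zero, Abelian.Ext.comp_zero, LinearMap.zero_apply]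

/-- The connecting map `Hom(I, M) → Ext^1(R/I, M)` of the sequence `0 → I → R → R/I → 0`. -/
noncomputable def connectingHom (I : Ideal R) (M : ModuleCat.{u} R) :
    (I →ₗ[R] M) →ₗ[R] Abelian.Ext (ModuleCat.of R (R ⧸ I)) M 1 :=
  (quotientSequence_shortExact I).extClass.precompOfLinear R M (add_zero 1) ∘ₗ
    (Abelian.Ext.linearEquiv₀.trans
      (ModuleCat.homLinearEquiv (M := ModuleCat.of R I) (S := R))).symm.toLinearMap

lemma connectingHom_apply {I : Ideal R} {M : ModuleCat.{u} R} (f : I →ₗ[R] M) :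
    connectingHom I M f = (quotientSequence_shortExact I).extClass.comp
      (Abelian.Ext.mk₀ (ModuleCat.ofHom f)) (add_zero 1) :=
  rfl

lemma connectingHom_surjective (I : Ideal R) (M : ModuleCat.{u} R) :
    Function.Surjective (connectingHom I M) := by
  intro e
  obtain ⟨e, rfl⟩ := exists_extClass_comp_eq e
  obtain ⟨f, rfl⟩ := (Abelian.Ext.mk₀_bijective _ _).2 e
  exact ⟨f.hom, rfl⟩

lemma connectingHom_eq_zero_iff {I : Ideal R} {M : ModuleCat.{u} R} (f : I →ₗ[R] M) :
    connectingHom I M f = 0 ↔ ∃ m : M, f = LinearMap.toSpanSingleton R M m ∘ₗ I.subtype := by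
  rw [connectingHom_apply]
  constructor
  · intro hf
    obtain ⟨e, he⟩ := Abelian.Ext.contravariant_sequence_exact₁ _ M _ _ hf
    obtain ⟨g, rfl⟩ := (Abelian.Ext.mk₀_bijective _ _).2 e
    rw [Abelian.Ext.mk₀_comp_mk₀] at he
    have subtype_comp_g : ModuleCat.ofHom I.subtype ≫ g = ModuleCat.ofHom f :=
      (Abelian.Ext.mk₀_bijective _ _).1 he
    refine ⟨g.hom (1 : R), LinearMap.ext fun y => ?_⟩
    calc f y = g.hom (y : R) := congr($(subtype_comp_g.symm) y)
      _ = (y : R) • g.hom (1 : R) := by rw [← map_smul, smul_eq_mul, mul_one]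
  · rintro ⟨m, rfl⟩
    rw [ModuleCat.ofHom_comp, ← Abelian.Ext.mk₀_comp_mk₀]
    exact ShortComplex.ShortExact.extClass_comp_assoc _ _

lemma extQuotientMap_connectingHom {I I' : Ideal R} (h : I ≤ I') {M : ModuleCat.{u} R}
    (f : I' →ₗ[R] M) : extQuotientMap h M 1 (connectingHom I' M f) =
      connectingHom I M (f ∘ₗ Submodule.inclusion h) := by
  rw [connectingHom_apply, extQuotientMap_extClass_comp, Abelian.Ext.mk₀_comp_mk₀]
  rfl

end

/-! ### Ideal transforms -/

section
variable {R : Type u} [CommRing R]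

/-- The restriction map `Hom(J^s, M) → Hom(J^t, M)` for `s ≤ t`. -/
abbrev restrictPow (J : Ideal R) (M : Type*) [AddCommGroup M] [Module R M] (s t : ℕ) (h : s ≤ t) :
    ((J ^ s : Ideal R) →ₗ[R] M) →ₗ[R] ((J ^ t : Ideal R) →ₗ[R] M) :=
  LinearMap.lcomp R M (Submodule.inclusion (Ideal.pow_le_pow_right h))

instance (J : Ideal R) (M : Type*) [AddCommGroup M] [Module R M] :
    DirectedSystem (fun t => (J ^ t : Ideal R) →ₗ[R] M) (restrictPow J M · · ·) where
  map_self _ _ := rfl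
  map_map _ _ _ _ _ _ := rfl

/-- The ideal transform `D_J(M) = colim_t Hom(J^t, M)`. -/
abbrev idealTransform (J : Ideal R) (M : Type*) [AddCommGroup M] [Module R M] : Type _ :=
  Module.DirectLimit (fun t => (J ^ t : Ideal R) →ₗ[R] M) (restrictPow J M)

variable (J : Ideal R) (M : ModuleCat.{u} R)

/-- The canonical map `M → D_J(M)`, via `M ≃ Hom(R, M) = Hom(J^0, M)`. -/
noncomputable def toIdealTransform : M →ₗ[R] idealTransform J M :=
  Module.DirectLimit.of R ℕ _ (restrictPow J M) 0 ∘ₗ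
    LinearMap.lcomp R M (J ^ 0 : Ideal R).subtype ∘ₗ (LinearMap.ringLmapEquivSelf R R M).symm

variable {J M} in
lemma toIdealTransform_apply (m : M) (t : ℕ) :
    toIdealTransform J M m = Module.DirectLimit.of R ℕ _ _ t
      (LinearMap.toSpanSingleton R M m ∘ₗ (J ^ t : Ideal R).subtype) :=
  (Module.DirectLimit.of_f (f := restrictPow J M) (hij := Nat.zero_le t)).symm

/-- The colimit `D_J(M) → H^1_J(M)` of the connecting maps `Hom(J^t, M) → Ext^1(R/J^t, M)`. -/
noncomputable def transformConnectingHom : idealTransform J M →ₗ[R] extColimit J M 1 :=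
  Module.DirectLimit.map (fun t => connectingHom (J ^ t) M) fun _ _ h =>
    LinearMap.ext fun f => (extQuotientMap_connectingHom (Ideal.pow_le_pow_right h) f).symm

variable {J M} in
lemma transformConnectingHom_of {t : ℕ} (f : (J ^ t : Ideal R) →ₗ[R] M) :
    transformConnectingHom J M (Module.DirectLimit.of R ℕ _ _ t f) =
      Module.DirectLimit.of R ℕ _ _ t (connectingHom (J ^ t) M f) :=
  Module.DirectLimit.map_apply_of _ _ _

lemma transformConnectingHom_surjective :
    Function.Surjective (transformConnectingHom J M) := by
  intro z
  obtain ⟨t, e, rfl⟩ := Module.DirectLimit.exists_of z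
  obtain ⟨f, rfl⟩ := connectingHom_surjective (J ^ t) M e
  exact ⟨_, transformConnectingHom_of f⟩

lemma exact_toIdealTransform_transformConnectingHom :
    Function.Exact (toIdealTransform J M) (transformConnectingHom J M) := by
  intro z
  constructor
  · intro hz
    obtain ⟨s, f, rfl⟩ := Module.DirectLimit.exists_of z
    rw [transformConnectingHom_of] at hz
    obtain ⟨t, hst, ht⟩ := Module.DirectLimit.of.zero_exact hz
    rw [extPowMap, extQuotientMap_connectingHom, connectingHom_eq_zero_iff] at ht
    obtain ⟨m, hm⟩ := ht
    refine ⟨m, ?_⟩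
    rw [toIdealTransform_apply m t, ← hm]
    exact Module.DirectLimit.of_f (f := restrictPow J M) (hij := hst)
  · rintro ⟨m, rfl⟩
    rw [toIdealTransform_apply m 0, transformConnectingHom_of,
      (connectingHom_eq_zero_iff _).2 ⟨m, rfl⟩, map_zero]

end

section
variable {R : Type u} [CommRing R]

lemma finite_ext_of_exact [IsNoetherianRing R] {N M D H : ModuleCat.{u} R} [Module.Finite R N]
    [Module.Finite R M] {φ : M →ₗ[R] D} {π : D →ₗ[R] H} (hφπ : Function.Exact φ π)
    (hπ : Function.Surjective π) (n : ℕ) [Subsingleton (Abelian.Ext N D n)] :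
    Module.Finite R (Abelian.Ext N H n) := by
  have exact_range : Function.Exact (LinearMap.range φ).subtype π := fun y => by
    rw [hφπ y, ← LinearMap.coe_range, ← LinearMap.coe_range, Submodule.range_subtype]
  let S : ShortComplex (ModuleCat.{u} R) :=
    ModuleCat.shortComplexOfCompEqZero _ _ exact_range.linearMap_comp_eq_zero
  have hS : S.ShortExact :=
    ModuleCat.shortComplex_shortExact S exact_range (Submodule.subtype_injective _) hπ
  refine Module.Finite.of_injective (hS.extClass.postcompOfLinear R N rfl) ?_
  rw [injective_iff_map_eq_zero]
  intro e he
  obtain ⟨e', rfl⟩ := Abelian.Ext.covariant_sequence_exact₃ N hS e rfl he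
  rw [Subsingleton.elim (α := Abelian.Ext N D n) e' 0, Abelian.Ext.zero_comp]

end

/-! ### Principal ideals -/

section

open Filter

variable {R : Type u} [CommRing R] (x : R)

/-- Multiplication by `x^k`, as a map from `(x)^n` onto `(x)^(n+k)`. -/
def mulPow (n k : ℕ) :
    (Ideal.span {x} ^ n : Ideal R) →ₗ[R] (Ideal.span {x} ^ (n + k) : Ideal R) :=
  (LinearMap.mulLeft R (x ^ k)).restrict fun y hy => by
    rw [add_comm, pow_add]
    exact Ideal.mul_mem_mul (Ideal.pow_mem_pow (Ideal.mem_span_singleton_self x) k) hy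

lemma mulPow_surjective (n k : ℕ) : Function.Surjective (mulPow x n k) := by
  rintro ⟨y, hy⟩
  rw [Ideal.span_singleton_pow, Ideal.mem_span_singleton] at hy
  obtain ⟨r, rfl⟩ := hy
  refine ⟨⟨x ^ n * r, Ideal.mul_mem_right r _ <|
    Ideal.pow_mem_pow (Ideal.mem_span_singleton_self x) n⟩, Subtype.ext ?_⟩
  change x ^ k * (x ^ n * r) = x ^ (n + k) * r
  ring

lemma eventually_mulPow_bijective [IsNoetherianRing R] (k : ℕ) :
    ∀ᶠ n in atTop, Function.Bijective (mulPow x n k) := by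
  filter_upwards [Module.End.eventually_disjoint_ker_pow_range_pow (LinearMap.mulLeft R x),
    eventually_ge_atTop k] with n disjoint hkn
  refine ⟨(injective_iff_map_eq_zero _).2 fun ⟨y, hy⟩ mul_eq_zero => Subtype.ext ?_,
    mulPow_surjective x n k⟩
  rw [LinearMap.pow_mulLeft] at disjoint
  rw [Ideal.span_singleton_pow, Ideal.mem_span_singleton] at hy
  obtain ⟨r, rfl⟩ := hy
  refine Submodule.disjoint_def.1 disjoint _ ?_ ⟨r, rfl⟩
  have pow_mul_eq_zero : x ^ k * (x ^ n * r) = 0 := congrArg Subtype.val mul_eq_zero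
  rw [LinearMap.mem_ker, LinearMap.mulLeft_apply]
  exact zero_dvd_iff.1 <| pow_mul_eq_zero ▸ mul_dvd_mul_right (pow_dvd_pow x hkn) _

lemma subsingleton_localCohomology_span_singleton [IsNoetherianRing R]
    (M : ModuleCat.{u} R) (n : ℕ) :
    Subsingleton ((localCohomology (Ideal.span {x}) (n + 2)).obj M) := by
  rw [(localCohomologyEquiv (Ideal.span {x}) M (n + 2)).toEquiv.subsingleton_congr]
  refine subsingleton_of_forall_eq 0 fun z => ?_
  obtain ⟨t, e, rfl⟩ := Module.DirectLimit.exists_of z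
  obtain ⟨m, hm⟩ := (eventually_mulPow_bijective x t).exists
  let mulEquiv := LinearEquiv.ofBijective (mulPow x m t) hm
  let generator : (Ideal.span {x} ^ t : Ideal R) :=
    ⟨x ^ t, Ideal.pow_mem_pow (Ideal.mem_span_singleton_self x) t⟩
  have inclusion_factors : LinearMap.toSpanSingleton R _ generator ∘ₗ
        Submodule.subtype _ ∘ₗ mulEquiv.symm.toLinearMap =
      Submodule.inclusion (Ideal.pow_le_pow_right (Nat.le_add_left t m)) := by
    ext z
    calc (mulEquiv.symm z : R) * x ^ t = x ^ t * mulEquiv.symm z := mul_comm _ _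
      _ = z := congrArg Subtype.val (mulEquiv.apply_symm_apply z)
  rw [← Module.DirectLimit.of_f (hij := Nat.le_add_left t m), extPowMap,
    extQuotientMap_eq_zero_of_inclusion_factors _ _ _ inclusion_factors, LinearMap.zero_apply,
    map_zero]

lemma restrictPow_comp_mulPow {M : Type*} [AddCommGroup M] [Module R M] {s n : ℕ} (h : s ≤ n)
    (k : ℕ) (f : (Ideal.span {x} ^ s : Ideal R) →ₗ[R] M) :
    restrictPow _ M s (n + k) (h.trans (n.le_add_right k)) f ∘ₗ mulPow x n k =
      x ^ k • restrictPow _ M s n h f :=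
  LinearMap.ext fun y => f.map_smul (x ^ k) (Submodule.inclusion (Ideal.pow_le_pow_right h) y)

lemma smul_idealTransform_injective (M : Type*) [AddCommGroup M] [Module R M] :
    Function.Injective (x • · : idealTransform (Ideal.span {x}) M → _) := by
  refine (injective_iff_map_eq_zero (DistribSMul.toAddMonoidHom _ x)).2 fun z hz => ?_
  obtain ⟨s, f, rfl⟩ := Module.DirectLimit.exists_of z
  obtain ⟨t, hst, ht⟩ := Module.DirectLimit.of.zero_exact ((map_smul _ _ _).trans hz)
  have restrict_eq_zero : restrictPow _ M s (t + 1) (hst.trans t.le_succ) f = 0 :=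
    LinearMap.cancel_right (mulPow_surjective x t 1) |>.1 <| by
      rw [restrictPow_comp_mulPow x hst, pow_one, ← map_smul, ht, LinearMap.zero_comp]
  rw [← Module.DirectLimit.of_f (f := restrictPow _ _) (hij := hst.trans t.le_succ),
    restrict_eq_zero, map_zero]

lemma smul_idealTransform_surjective [IsNoetherianRing R] (M : Type*) [AddCommGroup M]
    [Module R M] : Function.Surjective (x • · : idealTransform (Ideal.span {x}) M → _) := by
  intro z
  obtain ⟨s, f, rfl⟩ := Module.DirectLimit.exists_of z
  obtain ⟨t, ht, hst⟩ := ((eventually_mulPow_bijective x 1).and (eventually_ge_atTop s)).exists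
  let mulX := LinearEquiv.ofBijective (mulPow x t 1) ht
  let g := restrictPow _ M s t hst f ∘ₗ mulX.symm.toLinearMap
  have smul_g : x • g = restrictPow _ M s (t + 1) (hst.trans t.le_succ) f :=
    LinearMap.cancel_right (mulPow_surjective x t 1) |>.1 <| by
      rw [restrictPow_comp_mulPow x hst, pow_one, LinearMap.smul_comp]
      congr 1
      ext y
      exact congrArg (restrictPow _ M s t hst f) (mulX.symm_apply_apply y)
  refine ⟨Module.DirectLimit.of R ℕ _ (restrictPow _ M) (t + 1) g, ?_⟩
  calc x • Module.DirectLimit.of R ℕ _ (restrictPow _ M) (t + 1) g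
      = Module.DirectLimit.of R ℕ _ (restrictPow _ M) (t + 1) (x • g) := (map_smul _ _ _).symm
    _ = Module.DirectLimit.of R ℕ _ (restrictPow _ M) s f := by
        rw [smul_g, Module.DirectLimit.of_f]

lemma isIso_pow_smul_id_idealTransform [IsNoetherianRing R] (M : ModuleCat.{u} R) (k : ℕ) :
    IsIso (x ^ k • 𝟙 (ModuleCat.of R (idealTransform (Ideal.span {x}) M))) := by
  rw [ConcreteCategory.isIso_iff_bijective]
  have smul_bijective : Function.Bijective (x • · : idealTransform (Ideal.span {x}) M → _) :=
    ⟨smul_idealTransform_injective x M, smul_idealTransform_surjective x M⟩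
  have pow_smul_bijective := smul_bijective.iterate k
  rwa [smul_iterate] at pow_smul_bijective

lemma subsingleton_localCohomology [IsNoetherianRing R] {x : R} {a : Ideal R}
    (hx : a.radical = (Ideal.span {x}).radical) (M : ModuleCat.{u} R) {i : ℕ} (hi : 2 ≤ i) :
    Subsingleton ((localCohomology a i).obj M) := by
  obtain ⟨n, rfl⟩ := Nat.exists_eq_add_of_le' hi
  have := subsingleton_localCohomology_span_singleton x M n
  exact ((localCohomology.isoOfSameRadical hx (n + 2)).app M).toLinearEquiv.toEquiv.subsingleton

lemma isCofinite_localCohomology_one [IsNoetherianRing R] {x : R} {a : Ideal R}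
    (hx : a.radical = (Ideal.span {x}).radical) (M : ModuleCat.{u} R) [Module.Finite R M] :
    IsCofinite a ((localCohomology a 1).obj M) := by
  refine isCofinite_iff.2 ⟨support_localCohomology_subset a M 1, fun n => ?_⟩
  let J : Ideal R := Ideal.span {x}
  obtain ⟨k, hk⟩ : x ∈ a.radical := hx ▸ Ideal.le_radical (Ideal.mem_span_singleton_self x)
  let e : extColimit J M 1 ≃ₗ[R] (localCohomology a 1).obj M :=
    (localCohomologyEquiv J M 1).symm ≪≫ₗ
      ((localCohomology.isoOfSameRadical hx 1).app M).symm.toLinearEquiv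
  have exact : Function.Exact (toIdealTransform J M)
      (e.toLinearMap ∘ₗ transformConnectingHom J M) :=
    (exact_toIdealTransform_transformConnectingHom J M).comp_injective _ e.injective e.map_zero
  have surjective : Function.Surjective (e.toLinearMap ∘ₗ transformConnectingHom J M) :=
    e.surjective.comp (transformConnectingHom_surjective J M)
  have := isIso_pow_smul_id_idealTransform x M k
  have : Subsingleton
      (Abelian.Ext (ModuleCat.of R (R ⧸ a)) (ModuleCat.of R (idealTransform J M)) n) :=
    subsingleton_ext_of_isIso_smul (R := R) (smul_id_quotient_eq_zero hk) n
  exact finite_ext_of_exact (D := ModuleCat.of R (idealTransform J M)) exact surjective n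

end

lemma exists_radical_eq_radical_span_singleton {R : Type*} [CommRing R] {a : Ideal R}
    (hara : ∃ s : Finset R, s.card ≤ 1 ∧ (Ideal.span (s : Set R)).radical = a.radical) :
    ∃ x, a.radical = (Ideal.span {x}).radical := by
  obtain ⟨s, hs, radical_eq⟩ := hara
  obtain ⟨x, hx⟩ := Finset.card_le_one_iff_subset_singleton.1 hs
  obtain rfl | rfl := Finset.subset_singleton_iff.1 hx
  · exact ⟨0, by simpa using radical_eq.symm⟩
  · exact ⟨x, by simpa using radical_eq.symm⟩

end CofiniteLocalCohomology

open CofiniteLocalCohomology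

theorem stmt14 {R : Type u} [CommRing R] [IsNoetherianRing R] (a : Ideal R)
    (hara : ∃ s : Finset R, s.card ≤ 1 ∧ (Ideal.span (s : Set R)).radical = a.radical) :
    ∀ (M : ModuleCat.{u} R), Module.Finite R M →
      IsCofinite a ((localCohomology a 0).obj M) ∧
      IsCofinite a ((localCohomology a 1).obj M) ∧
      ∀ i : ℕ, 2 ≤ i → Subsingleton ((localCohomology a i).obj M) := by
  intro M _
  obtain ⟨x, hx⟩ := exists_radical_eq_radical_span_singleton hara
  exact ⟨isCofinite_localCohomology_zero a M, isCofinite_localCohomology_one hx M,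
    fun _ hi => subsingleton_localCohomology hx M hi⟩
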